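/- arXiv:2412.21048 — 2 statements merged into one kernel-verified Lean document; each statement's English description precedes it below -/
import Mathlib

section
/- Let f : ℝⁿ → ℝ be a C^∞ function with compact support contained in Ω, let u be its Bogovskiĭ field, and fix indices 1 ≤ i, j ≤ n. Then for every x ∈ Ω the principal-value limit L(x) = lim_{ε→0⁺} ∫_{{y : |x−y|>ε}} ( ∫₀¹ (∂η_i/∂z_j)(y, (x−y)/s) s^{−(n+1)} ds ) f(y) dy exists, and ∂u_i/∂x_j(x) = L(x) + ω_{ij}(x) f(x), where ω_{ij}(x) = ∫_{ℝⁿ} (z_i z_j / |z|²) ω(x+z) dz and η_i(y,z) = z_i ω(y+z). -/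
open MeasureTheory Metric Set Filter Topology

/-! Substituting `y = x - s z` turns `u(x)` into the integral of `z φ(s, z)` over `(0, 1) × ℝⁿ`,
where `φ(s, z) = ω(x + (1 - s) z) f(x - s z)` is supported in a bounded set of `z`, so `u` may be
differentiated under the integral sign. After the same substitution the truncated singular integral,
over `s ‖z‖ > ε`, differs from the truncated integral representing `∂u_i/∂x_j` by the integral of
`s⁻¹ ∂_j (z_i φ)`. This extra term is computed exactly: the vector field
`s⁻¹ ∂_j - (z_j / ‖z‖²) ∂_s` is divergence free and tangent to the hypersurface `s ‖z‖ = ε`, so the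
divergence theorem on `s ‖z‖ > ε` only sees the face `s = 1`. As `ε → 0`, integrating the `∂_s`-term
in `s` cancels that face and leaves the face `s = 0`, whose contribution is `-ω_{ij}(x) f(x)`. -/

section PrincipalValueIntegrals

variable {α E F : Type*} [MeasurableSpace α] {μ : Measure α} [NormedAddCommGroup E]
  [MeasurableSpace E] [OpensMeasurableSpace E] [NormedAddCommGroup F] [NormedSpace ℝ F]
  {g : α → E}

lemma measurableSet_lt_norm (hg : Measurable g) (ε : ℝ) : MeasurableSet {a | ε < ‖g a‖} :=
  measurableSet_lt measurable_const hg.norm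

lemma aecover_lt_norm (hg : Measurable g) (hg₀ : ∀ᵐ a ∂μ, g a ≠ 0) :
    AECover μ (𝓝[>] (0 : ℝ)) (fun ε => {a | ε < ‖g a‖}) where
  ae_eventually_mem := by
    filter_upwards [hg₀] with a ha
    exact nhdsWithin_le_nhds (eventually_lt_nhds (norm_pos_iff.2 ha))
  measurableSet ε := measurableSet_lt_norm hg ε

lemma tendsto_setIntegral_lt_norm (hg : Measurable g) (hg₀ : ∀ᵐ a ∂μ, g a ≠ 0) {Φ : α → F}
    (hΦ : Integrable Φ μ) :
    Tendsto (fun ε => ∫ a in {a | ε < ‖g a‖}, Φ a ∂μ) (𝓝[>] 0) (𝓝 (∫ a, Φ a ∂μ)) :=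
  (aecover_lt_norm hg hg₀).integral_tendsto_of_countably_generated hΦ

/-- A smooth approximation, as `k → ∞`, of the indicator function of `{t | c < t}`. It turns sharp
truncations into smooth ones, which can be integrated by parts. -/
noncomputable def smoothStep (c : ℝ) (k : ℕ) (t : ℝ) : ℝ :=
  Real.smoothTransition (k * (t - c))

lemma contDiff_smoothStep {n : ℕ∞} (c : ℝ) (k : ℕ) : ContDiff ℝ n (smoothStep c k) :=
  Real.smoothTransition.contDiff.comp (contDiff_const.mul (contDiff_id.sub contDiff_const))

lemma smoothStep_of_le {c t : ℝ} (k : ℕ) (ht : t ≤ c) : smoothStep c k t = 0 :=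
  Real.smoothTransition.zero_of_nonpos
    (mul_nonpos_of_nonneg_of_nonpos k.cast_nonneg (sub_nonpos.2 ht))

lemma abs_smoothStep_le_one (c : ℝ) (k : ℕ) (t : ℝ) : |smoothStep c k t| ≤ 1 :=
  (abs_of_nonneg (Real.smoothTransition.nonneg _)).trans_le (Real.smoothTransition.le_one _)

lemma tendsto_smoothStep_of_lt {c t : ℝ} (ht : c < t) :
    Tendsto (fun k => smoothStep c k t) atTop (𝓝 1) := by
  refine tendsto_const_nhds.congr' ?_
  have hlarge : Tendsto (fun k : ℕ => (k : ℝ) * (t - c)) atTop atTop :=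
    tendsto_natCast_atTop_atTop.atTop_mul_const (sub_pos.2 ht)
  filter_upwards [hlarge.eventually_ge_atTop 1] with k hk
  exact (Real.smoothTransition.one_of_one_le hk).symm

lemma tendsto_integral_smoothStep_smul (hg : Measurable g) {ε : ℝ} (hε : 0 < ε) {Φ : α → F}
    (hΦ : IntegrableOn Φ {a | ε < ‖g a‖} μ) :
    Tendsto (fun k => ∫ a, smoothStep (ε ^ 2) k (‖g a‖ ^ 2) • Φ a ∂μ) atTop
      (𝓝 (∫ a in {a | ε < ‖g a‖}, Φ a ∂μ)) := by
  have hoff : ∀ k a, a ∉ {a | ε < ‖g a‖} → smoothStep (ε ^ 2) k (‖g a‖ ^ 2) • Φ a = 0 := by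
    intro k a ha
    rw [smoothStep_of_le k (pow_le_pow_left₀ (norm_nonneg _) (not_lt.1 ha) 2), zero_smul]
  have hrestrict : ∀ k, ∫ a, smoothStep (ε ^ 2) k (‖g a‖ ^ 2) • Φ a ∂μ =
      ∫ a in {a | ε < ‖g a‖}, smoothStep (ε ^ 2) k (‖g a‖ ^ 2) • Φ a ∂μ := fun k =>
    (setIntegral_eq_integral_of_forall_compl_eq_zero (hoff k)).symm
  simp only [hrestrict]
  refine tendsto_integral_of_dominated_convergence (fun a => ‖Φ a‖) (fun k => ?_) hΦ.norm
    (fun k => Eventually.of_forall fun a => ?_) ?_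
  · have hstep : Measurable fun a => smoothStep (ε ^ 2) k (‖g a‖ ^ 2) :=
      (contDiff_smoothStep (n := 0) (ε ^ 2) k).continuous.measurable.comp (hg.norm.pow_const 2)
    exact hstep.aestronglyMeasurable.smul hΦ.aestronglyMeasurable
  · rw [norm_smul]
    exact mul_le_of_le_one_left (norm_nonneg _) (abs_smoothStep_le_one _ _ _)
  · filter_upwards [ae_restrict_mem (measurableSet_lt_norm hg ε)] with a ha
    have hlt : ε ^ 2 < ‖g a‖ ^ 2 := pow_lt_pow_left₀ ha hε.le two_ne_zero
    simpa only [one_smul] using (tendsto_smoothStep_of_lt hlt).smul_const (Φ a)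

end PrincipalValueIntegrals

section StripMeasure

lemma fderiv_eq_zero_of_notMem {H E F : Type*} [NormedAddCommGroup H] [NormedSpace ℝ H]
    [TopologicalSpace E] [NormedAddCommGroup F] [NormedSpace ℝ F] {g : H → E} (hg : Continuous g)
    {K : Set E} (hK : IsClosed K) {ψ : H → F} (hψK : ∀ a, g a ∉ K → ψ a = 0) {a : H}
    (ha : g a ∉ K) : fderiv ℝ ψ a = 0 := by
  have hlocal : ψ =ᶠ[𝓝 a] 0 := by
    filter_upwards [(hK.isOpen_compl.preimage hg).mem_nhds ha] with b hb
    exact hψK b hb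
  simp [hlocal.fderiv_eq]

variable {E : Type*} [MeasurableSpace E] {μ : Measure E}

/-- The product of Lebesgue measure on `(0, 1)` with `μ`, against which the Bogovskiĭ integrals are
taken after the substitution `y = x - s z`. -/
noncomputable abbrev stripMeasure (μ : Measure E) : Measure (ℝ × E) :=
  (volume.restrict (Ioo 0 1)).prod μ

lemma ae_stripMeasure_fst_mem [SFinite μ] : ∀ᵐ p ∂stripMeasure μ, p.1 ∈ Ioo (0 : ℝ) 1 :=
  Measure.quasiMeasurePreserving_fst.ae (ae_restrict_mem measurableSet_Ioo)

variable [SFinite μ] [NormedAddCommGroup E]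

lemma integrable_stripMeasure_of_continuous [OpensMeasurableSpace E] [SecondCountableTopology E]
    [IsFiniteMeasureOnCompacts μ] {F : Type*} [NormedAddCommGroup F] {K : Set E}
    {Φ : ℝ × E → F} (hΦ : Continuous Φ) (hK : IsCompact K) (hΦK : ∀ p, p.2 ∉ K → Φ p = 0) :
    Integrable Φ (stripMeasure μ) := by
  have hcompact : IntegrableOn Φ (Icc (0 : ℝ) 1 ×ˢ K) (volume.prod μ) :=
    hΦ.continuousOn.integrableOn_compact (isCompact_Icc.prod hK)
  rw [← integrableOn_univ]
  have hstrip : IntegrableOn Φ (univ ×ˢ K) (stripMeasure μ) := by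
    rw [IntegrableOn, ← Measure.prod_restrict, Measure.restrict_restrict .univ, univ_inter,
      Measure.prod_restrict]
    exact hcompact.mono_set (prod_mono_left Ioo_subset_Icc_self)
  exact hstrip.of_forall_sdiff_eq_zero .univ fun p hp => hΦK p fun hpK => hp.2 ⟨mem_univ _, hpK⟩

variable [NormedSpace ℝ E]

lemma ae_stripMeasure_smul_ne_zero [NullSingletonClass μ] :
    ∀ᵐ p ∂stripMeasure μ, p.1 • p.2 ≠ 0 := by
  have hsnd : ∀ᵐ p ∂stripMeasure μ, p.2 ≠ 0 :=
    Measure.quasiMeasurePreserving_snd.ae (Measure.ae_ne μ 0)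
  filter_upwards [ae_stripMeasure_fst_mem, hsnd] with p hp hz
  exact smul_ne_zero hp.1.ne' hz

lemma integral_mul_fderiv_fst_eq_sub {ψ : ℝ × E → ℝ} (hψ : ContDiff ℝ 1 ψ) (k : E → ℝ)
    (hint : Integrable (fun p => k p.2 * fderiv ℝ ψ p (1, 0)) (stripMeasure μ)) :
    ∫ p, k p.2 * fderiv ℝ ψ p (1, 0) ∂stripMeasure μ =
      ∫ z, k z * (ψ (1, z) - ψ (0, z)) ∂μ := by
  rw [integral_prod_symm _ hint]
  refine integral_congr_ae (.of_forall fun z => ?_)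
  have hderiv : ∀ s, HasDerivAt (fun t => ψ (t, z)) (fderiv ℝ ψ (s, z) (1, 0)) s := fun s =>
    (hψ.differentiable one_ne_zero (s, z)).hasFDerivAt.comp_hasDerivAt s
      ((hasDerivAt_id s).prodMk (hasDerivAt_const s z))
  have hcont : Continuous fun s => fderiv ℝ ψ (s, z) (1, 0) := by fun_prop
  simp only [integral_const_mul]
  rw [← integral_Ioc_eq_integral_Ioo, ← intervalIntegral.integral_of_le zero_le_one,
    intervalIntegral.integral_eq_sub_of_hasDerivAt (fun s _ => hderiv s)
      (hcont.intervalIntegrable 0 1)]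

variable [BorelSpace E] [SecondCountableTopology E] {K : Set E}

lemma measurableSet_le_norm_smul (ε : ℝ) : MeasurableSet {p : ℝ × E | ε ≤ ‖p.1 • p.2‖} :=
  measurableSet_le measurable_const (measurable_fst.smul measurable_snd).norm

lemma integrableOn_inv_fst_mul {ε : ℝ} (hε : 0 < ε) {Φ : ℝ × E → ℝ}
    (hΦ : Integrable Φ (stripMeasure μ)) (hK : IsCompact K)
    (hΦK : ∀ p, p.2 ∉ K → Φ p = 0) :
    IntegrableOn (fun p => p.1⁻¹ * Φ p) {p | ε ≤ ‖p.1 • p.2‖} (stripMeasure μ) := by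
  obtain ⟨R, hR⟩ := hK.isBounded.exists_norm_le
  have hfar := measurableSet_le_norm_smul (E := E) ε
  have hmeas : MeasurableSet ({p : ℝ × E | ε ≤ ‖p.1 • p.2‖} ∩ Prod.snd ⁻¹' K) :=
    hfar.inter (measurable_snd hK.isClosed.measurableSet)
  have hon : IntegrableOn (fun p => p.1⁻¹ * Φ p)
      ({p | ε ≤ ‖p.1 • p.2‖} ∩ Prod.snd ⁻¹' K) (stripMeasure μ) := by
    refine hΦ.integrableOn.bdd_mul (c := R / ε) measurable_fst.inv.aestronglyMeasurable ?_
    filter_upwards [ae_restrict_mem hmeas, ae_restrict_of_ae ae_stripMeasure_fst_mem]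
      with p ⟨hp, hpK⟩ hs
    have hsR : ε ≤ p.1 * R := by
      calc ε ≤ ‖p.1 • p.2‖ := hp
        _ = p.1 * ‖p.2‖ := by rw [norm_smul, Real.norm_of_nonneg hs.1.le]
        _ ≤ p.1 * R := mul_le_mul_of_nonneg_left (hR _ hpK) hs.1.le
    rw [norm_inv, Real.norm_of_nonneg hs.1.le, inv_le_iff_one_le_mul₀ hs.1]
    rw [div_mul_eq_mul_div, one_le_div hε]
    linarith
  refine hon.of_forall_sdiff_eq_zero hfar fun p hp => ?_
  rw [hΦK p fun hpK => hp.2 ⟨hp.1, hpK⟩, mul_zero]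

variable [IsFiniteMeasureOnCompacts μ]

lemma integrable_fderiv_apply_stripMeasure {ψ : ℝ × E → ℝ} (hψ : ContDiff ℝ 1 ψ)
    (hK : IsCompact K) (hψK : ∀ p, p.2 ∉ K → ψ p = 0) (w : ℝ × E) :
    Integrable (fun p => fderiv ℝ ψ p w) (stripMeasure μ) :=
  integrable_stripMeasure_of_continuous (by fun_prop) hK fun _ hp => by
    rw [fderiv_eq_zero_of_notMem continuous_snd hK.isClosed hψK hp, zero_apply]

end StripMeasure

section VerticalDivergence

variable {E : Type*} [NormedAddCommGroup E] [NormedSpace ℝ E] [FiniteDimensional ℝ E]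
  [MeasurableSpace E] [BorelSpace E] {μ : Measure E} [μ.IsAddHaarMeasure]

lemma integral_fderiv_apply_eq_zero {g : E → ℝ} (hg : ContDiff ℝ 1 g) (hgc : HasCompactSupport g)
    (v : E) : ∫ z, fderiv ℝ g z v ∂μ = 0 := by
  have hderiv : Continuous fun z => fderiv ℝ g z v := by fun_prop
  have hparts := integral_mul_fderiv_eq_neg_fderiv_mul_of_integrable (μ := μ)
    (f := fun _ : E => (1 : ℝ)) (g := g) (v := v) (by simp)
    (by simpa using hderiv.integrable_of_hasCompactSupport (hgc.fderiv_apply ℝ v))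
    (by simpa using hg.continuous.integrable_of_hasCompactSupport hgc)
    (by simp) (fun z _ => hg.differentiable one_ne_zero z)
  simpa using hparts

lemma integral_inv_fst_mul_fderiv_eq_zero {ψ : ℝ × E → ℝ} (hψ : ContDiff ℝ 1 ψ)
    {K : Set E} (hK : IsCompact K) (hψK : ∀ p, p.2 ∉ K → ψ p = 0) (v : E)
    (hint : Integrable (fun p => p.1⁻¹ * fderiv ℝ ψ p (0, v)) (stripMeasure μ)) :
    ∫ p, p.1⁻¹ * fderiv ℝ ψ p (0, v) ∂stripMeasure μ = 0 := by
  have hslice : ∀ s, ∫ z, fderiv ℝ ψ (s, z) (0, v) ∂μ = 0 := by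
    intro s
    have hderiv : ∀ z, fderiv ℝ (fun w => ψ (s, w)) z v = fderiv ℝ ψ (s, z) (0, v) := fun z => by
      have := ((hψ.differentiable one_ne_zero (s, z)).hasFDerivAt.comp z
        (hasFDerivAt_prodMk_right s z)).fderiv
      exact congr($this v)
    simp only [← hderiv]
    exact integral_fderiv_apply_eq_zero (by fun_prop)
      (HasCompactSupport.intro hK fun z hz => hψK (s, z) hz) v
  rw [integral_prod _ hint]
  simp only [integral_const_mul, hslice, mul_zero, integral_zero]

end VerticalDivergence

section TangentialField

variable {E : Type*} [NormedAddCommGroup E] [InnerProductSpace ℝ E]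

/-- The kernel `⟪z, v⟫ / ‖z‖²`, with value `0` at `z = 0`. It is the derivative of `log ‖z‖` in the
direction `v`, hence the relative rate at which `s` must decrease for `‖s z‖` to stay constant. -/
noncomputable def radialKernel (v z : E) : ℝ :=
  inner ℝ z v / ‖z‖ ^ 2

lemma abs_radialKernel_mul_norm_le (v z : E) : |radialKernel v z| * ‖z‖ ≤ ‖v‖ := by
  rcases eq_or_ne z 0 with rfl | hz
  · simp
  · have hz : 0 < ‖z‖ := norm_pos_iff.2 hz
    rw [radialKernel, abs_div, abs_of_nonneg (sq_nonneg ‖z‖), div_mul_eq_mul_div,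
      div_le_iff₀ (by positivity)]
    nlinarith [abs_real_inner_le_norm z v]

/-- The derivative of `ψ : ℝ × E → ℝ` along the vector field `s⁻¹ v · ∂_z - (⟪z, v⟫ / ‖z‖²) ∂_s`,
which is divergence free and tangent to the level sets of `‖s z‖`. -/
noncomputable def tangentialDeriv (v : E) (ψ : ℝ × E → ℝ) (p : ℝ × E) : ℝ :=
  p.1⁻¹ * fderiv ℝ ψ p (0, v) - radialKernel v p.2 * fderiv ℝ ψ p (1, 0)

lemma hasFDerivAt_norm_smul_sq (p : ℝ × E) :
    HasFDerivAt (fun q : ℝ × E => ‖q.1 • q.2‖ ^ 2)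
      ((2 * p.1 ^ 2) • (innerSL ℝ p.2).comp (.snd ℝ ℝ E) +
        (2 * p.1 * ‖p.2‖ ^ 2) • .fst ℝ ℝ E) p := by
  have hsnd := (hasStrictFDerivAt_norm_sq p.2).hasFDerivAt.comp p hasFDerivAt_snd
  have hprod := (hasFDerivAt_fst (𝕜 := ℝ) (p := p)).pow 2 |>.mul hsnd
  refine (hprod.congr_fderiv ?_).congr_of_eventuallyEq (.of_forall fun q => ?_)
  · ext <;> simp <;> ring
  · simp [norm_smul, mul_pow]

lemma tangentialDeriv_mul_comp_norm_smul_sq (v : E) {ψ : ℝ × E → ℝ} {h : ℝ → ℝ} {p : ℝ × E}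
    (hψ : DifferentiableAt ℝ ψ p) (hh : DifferentiableAt ℝ h (‖p.1 • p.2‖ ^ 2)) :
    tangentialDeriv v (fun q => h (‖q.1 • q.2‖ ^ 2) * ψ q) p =
      h (‖p.1 • p.2‖ ^ 2) * tangentialDeriv v ψ p := by
  have hcutoff := hh.hasDerivAt.comp_hasFDerivAt p (hasFDerivAt_norm_smul_sq p)
  have hcancel : p.1⁻¹ * (p.1 ^ 2 * inner ℝ p.2 v) = radialKernel v p.2 * (p.1 * ‖p.2‖ ^ 2) := by
    rcases eq_or_ne p.1 0 with hs | hs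
    · simp [hs]
    rcases eq_or_ne p.2 0 with hz | hz
    · simp [hz]
    have := norm_ne_zero_iff.2 hz
    rw [radialKernel]
    field_simp
  have hmul : HasFDerivAt (fun q => h (‖q.1 • q.2‖ ^ 2) * ψ q) _ p := hcutoff.mul hψ.hasFDerivAt
  rw [tangentialDeriv, tangentialDeriv, hmul.fderiv]
  simp only [Function.comp_apply, smul_add, add_apply, smul_apply, smul_eq_mul,
    ContinuousLinearMap.comp_apply, ContinuousLinearMap.coe_snd', coe_innerSL_apply,
    ContinuousLinearMap.coe_fst', mul_zero, add_zero, inner_zero_right, mul_one, zero_add]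
  linear_combination (2 * ψ p * deriv h (‖p.1 • p.2‖ ^ 2)) * hcancel

variable [MeasurableSpace E] [BorelSpace E]

lemma measurable_radialKernel [SecondCountableTopology E] (v : E) :
    Measurable (radialKernel v) := by
  unfold radialKernel
  fun_prop

lemma integrableOn_radialKernel_comp_mul [SecondCountableTopology E] {α : Type*}
    [MeasurableSpace α] {m : Measure α} {g : α → E} (hg : Measurable g) {Φ : α → ℝ}
    (hΦ : Integrable Φ m) (v : E) {ε : ℝ} (hε : 0 < ε) :
    IntegrableOn (fun a => radialKernel v (g a) * Φ a) {a | ε ≤ ‖g a‖} m := by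
  refine hΦ.integrableOn.bdd_mul (c := ‖v‖ / ε)
    ((measurable_radialKernel v).comp hg).aestronglyMeasurable ?_
  filter_upwards [ae_restrict_mem (measurableSet_le measurable_const hg.norm)] with a ha
  rw [le_div_iff₀ hε]
  exact (mul_le_mul_of_nonneg_left ha (abs_nonneg _)).trans
    (abs_radialKernel_mul_norm_le v (g a))

lemma integrable_radialKernel_comp_mul_clm_mul [SecondCountableTopology E] {α : Type*}
    [MeasurableSpace α] {m : Measure α} {g : α → E} (hg : Measurable g) {Φ : α → ℝ}
    (hΦ : Integrable Φ m) (l : E →L[ℝ] ℝ) (v : E) :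
    Integrable (fun a => radialKernel v (g a) * (l (g a) * Φ a)) m := by
  simp only [← mul_assoc]
  refine hΦ.bdd_mul (c := ‖l‖ * ‖v‖) (((measurable_radialKernel v).comp hg).mul
    (l.measurable.comp hg)).aestronglyMeasurable (.of_forall fun a => ?_)
  calc ‖radialKernel v (g a) * l (g a)‖ ≤ |radialKernel v (g a)| * (‖l‖ * ‖g a‖) := by
        rw [norm_mul, Real.norm_eq_abs]
        exact mul_le_mul_of_nonneg_left (l.le_opNorm _) (abs_nonneg _)
    _ = ‖l‖ * (|radialKernel v (g a)| * ‖g a‖) := by ring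
    _ ≤ ‖l‖ * ‖v‖ :=
        mul_le_mul_of_nonneg_left (abs_radialKernel_mul_norm_le v (g a)) (norm_nonneg _)

lemma integrableOn_radialKernel_snd_mul [SecondCountableTopology E] {μ : Measure E} [SFinite μ]
    {Φ : ℝ × E → ℝ} (hΦ : Integrable Φ (stripMeasure μ)) (v : E) {ε : ℝ} (hε : 0 < ε) :
    IntegrableOn (fun p => radialKernel v p.2 * Φ p) {p | ε ≤ ‖p.1 • p.2‖} (stripMeasure μ) := by
  refine (integrableOn_radialKernel_comp_mul measurable_snd hΦ v hε).mono_set_ae ?_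
  filter_upwards [ae_stripMeasure_fst_mem] with p hs (hp : ε ≤ ‖p.1 • p.2‖)
  calc ε ≤ p.1 * ‖p.2‖ := by rwa [norm_smul, Real.norm_of_nonneg hs.1.le] at hp
    _ ≤ ‖p.2‖ := mul_le_of_le_one_left (norm_nonneg _) hs.2.le

variable [FiniteDimensional ℝ E] {μ : Measure E} [μ.IsAddHaarMeasure] {K : Set E} {ε : ℝ}
  {ψ : ℝ × E → ℝ}

lemma integrableOn_inv_fst_mul_fderiv (hψ : ContDiff ℝ 1 ψ) (hK : IsCompact K)
    (hψK : ∀ p, p.2 ∉ K → ψ p = 0) (hε : 0 < ε) (v : E) :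
    IntegrableOn (fun p => p.1⁻¹ * fderiv ℝ ψ p (0, v)) {p | ε ≤ ‖p.1 • p.2‖}
      (stripMeasure μ) :=
  integrableOn_inv_fst_mul hε (integrable_fderiv_apply_stripMeasure hψ hK hψK (0, v)) hK
    fun _ hp => by rw [fderiv_eq_zero_of_notMem continuous_snd hK.isClosed hψK hp, zero_apply]

lemma integrableOn_radialKernel_mul_fderiv (hψ : ContDiff ℝ 1 ψ) (hK : IsCompact K)
    (hψK : ∀ p, p.2 ∉ K → ψ p = 0) (hε : 0 < ε) (v : E) :
    IntegrableOn (fun p => radialKernel v p.2 * fderiv ℝ ψ p (1, 0)) {p | ε ≤ ‖p.1 • p.2‖}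
      (stripMeasure μ) :=
  integrableOn_radialKernel_snd_mul (integrable_fderiv_apply_stripMeasure hψ hK hψK (1, 0)) v hε

lemma integral_tangentialDeriv_of_eq_zero_near (hψ : ContDiff ℝ 1 ψ) (hK : IsCompact K)
    (hψK : ∀ p, p.2 ∉ K → ψ p = 0) (hε : 0 < ε) (hψε : ∀ p, ‖p.1 • p.2‖ < ε → ψ p = 0) (v : E) :
    ∫ p, tangentialDeriv v ψ p ∂stripMeasure μ = -∫ z, radialKernel v z * ψ (1, z) ∂μ := by
  have hfderiv : ∀ w, Function.support (fun p => fderiv ℝ ψ p w) ⊆ {p | ε ≤ ‖p.1 • p.2‖} := by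
    have hclosed : IsClosed {p : ℝ × E | ε ≤ ‖p.1 • p.2‖} := isClosed_le (by fun_prop) (by fun_prop)
    have hsupp : tsupport ψ ⊆ {p | ε ≤ ‖p.1 • p.2‖} :=
      closure_minimal (fun p hp => not_lt.1 fun hlt => hp (hψε p hlt)) hclosed
    exact fun w => (subset_tsupport _).trans ((tsupport_fderiv_apply_subset ℝ w).trans hsupp)
  have hvert : Integrable (fun p => p.1⁻¹ * fderiv ℝ ψ p (0, v)) (stripMeasure μ) :=
    (integrableOn_iff_integrable_of_support_subset
      ((Function.support_mul_subset_right _ _).trans (hfderiv (0, v)))).1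
      (integrableOn_inv_fst_mul_fderiv hψ hK hψK hε v)
  have hhor : Integrable (fun p => radialKernel v p.2 * fderiv ℝ ψ p (1, 0)) (stripMeasure μ) :=
    (integrableOn_iff_integrable_of_support_subset
      ((Function.support_mul_subset_right _ _).trans (hfderiv (1, 0)))).1
      (integrableOn_radialKernel_mul_fderiv hψ hK hψK hε v)
  have hbottom : ∀ z, ψ (0, z) = 0 := fun z => hψε _ (by simpa using hε)
  simp only [tangentialDeriv]
  rw [integral_sub hvert hhor, integral_inv_fst_mul_fderiv_eq_zero hψ hK hψK v hvert,
    integral_mul_fderiv_fst_eq_sub hψ _ hhor, zero_sub]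
  simp only [hbottom, sub_zero]

lemma setIntegral_tangentialDeriv (hψ : ContDiff ℝ 1 ψ) (hK : IsCompact K)
    (hψK : ∀ p, p.2 ∉ K → ψ p = 0) (hε : 0 < ε) (v : E) :
    ∫ p in {p | ε < ‖p.1 • p.2‖}, tangentialDeriv v ψ p ∂stripMeasure μ =
      -∫ z in {z | ε < ‖z‖}, radialKernel v z * ψ (1, z) ∂μ := by
  have hcutoff : ∀ k, ∫ p, smoothStep (ε ^ 2) k (‖p.1 • p.2‖ ^ 2) • tangentialDeriv v ψ p
      ∂stripMeasure μ =
      -∫ z, smoothStep (ε ^ 2) k (‖z‖ ^ 2) • (radialKernel v z * ψ (1, z)) ∂μ := by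
    intro k
    have hstep : ContDiff ℝ 1 (smoothStep (ε ^ 2) k) := contDiff_smoothStep _ _
    have hcut := integral_tangentialDeriv_of_eq_zero_near (μ := μ) (K := K) (ε := ε)
      (ψ := fun q => smoothStep (ε ^ 2) k (‖q.1 • q.2‖ ^ 2) * ψ q)
      ((hstep.comp ((contDiff_fst.smul contDiff_snd).norm_sq ℝ)).mul hψ) hK
      (fun p hp => by rw [hψK p hp, mul_zero]) hε
      (fun p hp => by
        rw [smoothStep_of_le k (pow_le_pow_left₀ (norm_nonneg _) hp.le 2), zero_mul]) v
    simp only [fun p => tangentialDeriv_mul_comp_norm_smul_sq v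
      (hψ.differentiable one_ne_zero p) (hstep.differentiable one_ne_zero _), one_smul] at hcut
    simpa only [smul_eq_mul, mul_left_comm] using hcut
  have hfar : IntegrableOn (tangentialDeriv v ψ) {p | ε < ‖p.1 • p.2‖} (stripMeasure μ) :=
    ((integrableOn_inv_fst_mul_fderiv hψ hK hψK hε v).sub
      (integrableOn_radialKernel_mul_fderiv hψ hK hψK hε v)).mono_set
        (ofPred_subset_ofPred.2 fun _ => le_of_lt)
  have htop : IntegrableOn (fun z => radialKernel v z * ψ (1, z)) {z | ε < ‖z‖} μ := by
    have hcont : Continuous fun z => ψ (1, z) := by fun_prop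
    have hcpt : HasCompactSupport fun z => ψ (1, z) := .intro hK fun z hz => hψK (1, z) hz
    exact (integrableOn_radialKernel_comp_mul measurable_id
      (hcont.integrable_of_hasCompactSupport hcpt) v hε).mono_set
        (ofPred_subset_ofPred.2 fun _ => le_of_lt)
  refine tendsto_nhds_unique
    (tendsto_integral_smoothStep_smul (measurable_fst.smul measurable_snd) hε hfar) ?_
  exact (tendsto_integral_smoothStep_smul measurable_id hε htop).neg.congr fun k =>
    (hcutoff k).symm

lemma tendsto_setIntegral_inv_fst_mul_fderiv [Nontrivial E] (hψ : ContDiff ℝ 1 ψ)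
    (hK : IsCompact K) (hψK : ∀ p, p.2 ∉ K → ψ p = 0) (v : E)
    (hfst : Integrable (fun p => radialKernel v p.2 * fderiv ℝ ψ p (1, 0)) (stripMeasure μ))
    (hslice : ∀ s, Integrable (fun z => radialKernel v z * ψ (s, z)) μ) :
    Tendsto (fun ε => ∫ p in {p | ε < ‖p.1 • p.2‖}, p.1⁻¹ * fderiv ℝ ψ p (0, v) ∂stripMeasure μ)
      (𝓝[>] 0) (𝓝 (-∫ z, radialKernel v z * ψ (0, z) ∂μ)) := by
  have hlim := (tendsto_setIntegral_lt_norm measurable_id (Measure.ae_ne μ 0) (hslice 1)).neg.add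
    (tendsto_setIntegral_lt_norm (measurable_fst.smul measurable_snd)
      ae_stripMeasure_smul_ne_zero hfst)
  have hvalue : -∫ z, radialKernel v z * ψ (0, z) ∂μ =
      -∫ z, radialKernel v z * ψ (1, z) ∂μ +
        ∫ p, radialKernel v p.2 * fderiv ℝ ψ p (1, 0) ∂stripMeasure μ := by
    rw [integral_mul_fderiv_fst_eq_sub hψ _ hfst]
    simp only [mul_sub]
    rw [integral_sub (hslice 1) (hslice 0)]
    ring
  rw [hvalue]
  refine hlim.congr' ?_
  filter_upwards [self_mem_nhdsWithin] with ε hε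
  have hvert : IntegrableOn (fun p => p.1⁻¹ * fderiv ℝ ψ p (0, v)) {p | ε < ‖p.1 • p.2‖}
      (stripMeasure μ) :=
    (integrableOn_inv_fst_mul_fderiv hψ hK hψK hε v).mono_set
      (ofPred_subset_ofPred.2 fun _ => le_of_lt)
  have htan := setIntegral_tangentialDeriv (μ := μ) hψ hK hψK hε v
  simp only [tangentialDeriv] at htan
  rw [integral_sub hvert hfst.integrableOn, sub_eq_iff_eq_add] at htan
  exact htan.symm

lemma tendsto_setIntegral_inv_fst_mul_fderiv_clm_mul [Nontrivial E] {φ : ℝ × E → ℝ}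
    (hφ : ContDiff ℝ 1 φ) (hK : IsCompact K) (hφK : ∀ p, p.2 ∉ K → φ p = 0) (l : E →L[ℝ] ℝ)
    (v : E) :
    Tendsto (fun ε => ∫ p in {p | ε < ‖p.1 • p.2‖},
        p.1⁻¹ * fderiv ℝ (fun q => l q.2 * φ q) p (0, v) ∂stripMeasure μ)
      (𝓝[>] 0) (𝓝 (-∫ z, radialKernel v z * (l z * φ (0, z)) ∂μ)) := by
  refine tendsto_setIntegral_inv_fst_mul_fderiv (by fun_prop) hK
    (fun p hp => by rw [hφK p hp, mul_zero]) v ?_ fun s => ?_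
  · have hderiv : ∀ p, fderiv ℝ (fun q : ℝ × E => l q.2 * φ q) p (1, 0) =
        l p.2 * fderiv ℝ φ p (1, 0) := fun p => by
      have hmul : HasFDerivAt (fun q : ℝ × E => l q.2 * φ q) _ p :=
        (l.hasFDerivAt.comp p hasFDerivAt_snd).mul (hφ.differentiable one_ne_zero p).hasFDerivAt
      simp [hmul.fderiv]
    simp only [hderiv]
    exact integrable_radialKernel_comp_mul_clm_mul measurable_snd
      (integrable_fderiv_apply_stripMeasure hφ hK hφK (1, 0)) l v
  · have hcont : Continuous fun z => φ (s, z) := by fun_prop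
    exact integrable_radialKernel_comp_mul_clm_mul measurable_id
      (hcont.integrable_of_hasCompactSupport (.intro hK fun z hz => hφK (s, z) hz)) l v

end TangentialField

section ScaledDifference

variable {E : Type*} [NormedAddCommGroup E] [NormedSpace ℝ E] [FiniteDimensional ℝ E]
  [MeasurableSpace E] [BorelSpace E] {μ : Measure E} [μ.IsAddHaarMeasure]
  {F : Type*} [NormedAddCommGroup F] [NormedSpace ℝ F]

lemma integral_inv_pow_smul_comp_inv_smul_sub (g : E → F) (x : E) {s : ℝ} (hs : 0 < s) :
    ∫ y, (s ^ Module.finrank ℝ E)⁻¹ • g (s⁻¹ • (x - y)) ∂μ = ∫ z, g z ∂μ := by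
  rw [integral_sub_left_eq_self (fun w => (s ^ Module.finrank ℝ E)⁻¹ • g (s⁻¹ • w)),
    integral_smul, Measure.integral_comp_inv_smul_of_nonneg _ _ hs.le, inv_smul_smul₀]
  positivity

lemma integral_integral_inv_pow_smul_comp_inv_smul_sub {Ψ : ℝ × E → F}
    (hm : StronglyMeasurable Ψ) (hΨ : Integrable Ψ (stripMeasure μ)) (x : E) :
    ∫ y, (∫ s in Ioo (0 : ℝ) 1,
      (s ^ Module.finrank ℝ E)⁻¹ • Ψ (s, s⁻¹ • (x - y))) ∂μ = ∫ p, Ψ p ∂stripMeasure μ := by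
  have hmeas : StronglyMeasurable fun p : ℝ × E =>
      (p.1 ^ Module.finrank ℝ E)⁻¹ • Ψ (p.1, p.1⁻¹ • (x - p.2)) :=
    (Measurable.stronglyMeasurable (by fun_prop)).smul (hm.comp_measurable (by fun_prop))
  have hint : Integrable (fun p : ℝ × E =>
      (p.1 ^ Module.finrank ℝ E)⁻¹ • Ψ (p.1, p.1⁻¹ • (x - p.2))) (stripMeasure μ) := by
    refine (integrable_prod_iff hmeas.aestronglyMeasurable).2 ⟨?_, ?_⟩
    · filter_upwards [hΨ.prod_right_ae, ae_restrict_mem measurableSet_Ioo] with s hslice hs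
      have hscaled := (integrable_comp_smul_iff μ _ (inv_ne_zero hs.1.ne')).2 hslice
      exact (hscaled.comp_sub_left x).smul _
    · refine hΨ.integral_norm_prod_left.congr ?_
      filter_upwards [ae_restrict_mem measurableSet_Ioo] with s hs
      rw [← integral_inv_pow_smul_comp_inv_smul_sub (fun z => ‖Ψ (s, z)‖) x hs.1]
      simp only [norm_smul, norm_inv, norm_pow, Real.norm_of_nonneg hs.1.le, smul_eq_mul]
  rw [← integral_integral_swap (f := fun s y =>
    (s ^ Module.finrank ℝ E)⁻¹ • Ψ (s, s⁻¹ • (x - y))) hint, integral_prod _ hΨ]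
  exact setIntegral_congr_fun measurableSet_Ioo fun s hs =>
    integral_inv_pow_smul_comp_inv_smul_sub (fun z => Ψ (s, z)) x hs.1

lemma setIntegral_integral_inv_pow_smul_comp_inv_smul_sub {Ψ : ℝ × E → F}
    (hm : StronglyMeasurable Ψ) {ε : ℝ}
    (hΨ : IntegrableOn Ψ {p | ε < ‖p.1 • p.2‖} (stripMeasure μ)) (x : E) :
    ∫ y in {y | ε < ‖x - y‖}, (∫ s in Ioo (0 : ℝ) 1,
      (s ^ Module.finrank ℝ E)⁻¹ • Ψ (s, s⁻¹ • (x - y))) ∂μ =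
      ∫ p in {p | ε < ‖p.1 • p.2‖}, Ψ p ∂stripMeasure μ := by
  have hfar : MeasurableSet {p : ℝ × E | ε < ‖p.1 • p.2‖} :=
    measurableSet_lt_norm (measurable_fst.smul measurable_snd) ε
  have hball : MeasurableSet {y : E | ε < ‖x - y‖} :=
    measurableSet_lt_norm (measurable_id.const_sub x) ε
  rw [← integral_indicator hfar, ← integral_integral_inv_pow_smul_comp_inv_smul_sub
    (hm.indicator hfar) (hΨ.integrable_indicator hfar) x,
    ← integral_indicator hball]
  refine integral_congr_ae (.of_forall fun y => ?_)
  have hmem : ∀ s ∈ Ioo (0 : ℝ) 1,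
      (s, s⁻¹ • (x - y)) ∈ {p : ℝ × E | ε < ‖p.1 • p.2‖} ↔ ε < ‖x - y‖ := fun s hs => by
    rw [mem_ofPred_eq, smul_inv_smul₀ hs.1.ne']
  by_cases hy : ε < ‖x - y‖
  · rw [indicator_of_mem (s := {y | ε < ‖x - y‖}) hy]
    exact setIntegral_congr_fun measurableSet_Ioo fun s hs => by
      simp only [indicator_of_mem ((hmem s hs).2 hy)]
  · rw [indicator_of_notMem (s := {y | ε < ‖x - y‖}) hy, eq_comm]
    exact setIntegral_eq_zero_of_forall_eq_zero fun s hs => by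
      rw [indicator_of_notMem (fun h => hy ((hmem s hs).1 h)), smul_zero]

end ScaledDifference

section ParametricIntegral

variable {E F H : Type*} [NormedAddCommGroup E] [NormedSpace ℝ E]
  [NormedAddCommGroup F] [NormedSpace ℝ F] [NormedAddCommGroup H] [NormedSpace ℝ H]

lemma fderiv_comp_inl_eq_zero_of_snd_notMem {Φ : H × ℝ × E → F} {K : Set E} (hK : IsClosed K)
    (hΦK : ∀ x p, p.2 ∉ K → Φ (x, p) = 0) (x : H) {p : ℝ × E} (hp : p.2 ∉ K) :
    fderiv ℝ Φ (x, p) ∘L .inl ℝ H (ℝ × E) = 0 := by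
  rw [fderiv_eq_zero_of_notMem (g := fun q : H × ℝ × E => q.2.2) (by fun_prop) hK
    (fun q hq => hΦK q.1 q.2 hq) hp, ContinuousLinearMap.zero_comp]

variable [MeasurableSpace E] [OpensMeasurableSpace E] [SecondCountableTopology E] {μ : Measure E}
  [IsFiniteMeasureOnCompacts μ] [SFinite μ]

lemma integrable_fderiv_comp_inl_stripMeasure {Φ : H × ℝ × E → F} (hΦ : ContDiff ℝ 1 Φ)
    {K : Set E} (hK : IsCompact K) (hΦK : ∀ x p, p.2 ∉ K → Φ (x, p) = 0) (x : H) :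
    Integrable (fun p => fderiv ℝ Φ (x, p) ∘L .inl ℝ H (ℝ × E)) (stripMeasure μ) :=
  integrable_stripMeasure_of_continuous (by fun_prop) hK fun _ hp =>
    fderiv_comp_inl_eq_zero_of_snd_notMem hK.isClosed hΦK x hp

lemma hasFDerivAt_integral_stripMeasure [ProperSpace H] {Φ : H × ℝ × E → F}
    (hΦ : ContDiff ℝ 1 Φ) {K : Set E} (hK : IsCompact K)
    (hΦK : ∀ x p, p.2 ∉ K → Φ (x, p) = 0) (x : H) :
    HasFDerivAt (fun y => ∫ p, Φ (y, p) ∂stripMeasure μ)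
      (∫ p, fderiv ℝ Φ (x, p) ∘L .inl ℝ H (ℝ × E) ∂stripMeasure μ) x := by
  have hcont : Continuous fun q : H × ℝ × E => fderiv ℝ Φ q ∘L .inl ℝ H (ℝ × E) := by
    fun_prop
  have hpartial : ∀ y p, HasFDerivAt (fun y => Φ (y, p))
      (fderiv ℝ Φ (y, p) ∘L .inl ℝ H (ℝ × E)) y := fun y p =>
    (hΦ.differentiable one_ne_zero (y, p)).hasFDerivAt.comp y (hasFDerivAt_prodMk_left y p)
  have hcompact : IsCompact (closedBall x 1 ×ˢ Icc (0 : ℝ) 1 ×ˢ K) :=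
    (isCompact_closedBall x 1).prod (isCompact_Icc.prod hK)
  obtain ⟨C, hC⟩ := hcompact.exists_bound_of_continuousOn hcont.continuousOn
  have hmeas : MeasurableSet (univ ×ˢ K : Set (ℝ × E)) := .prod .univ hK.measurableSet
  refine hasFDerivAt_integral_of_dominated_of_fderiv_le (bound := (univ ×ˢ K).indicator fun _ => C)
    (closedBall_mem_nhds x one_pos) (.of_forall fun y => ?_) ?_ ?_ ?_ ?_
    (.of_forall fun p y _ => hpartial y p)
  · exact (hΦ.continuous.comp (by fun_prop)).aestronglyMeasurable
  · exact integrable_stripMeasure_of_continuous (hΦ.continuous.comp (by fun_prop)) hK (hΦK x)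
  · exact (integrable_fderiv_comp_inl_stripMeasure hΦ hK hΦK x).aestronglyMeasurable
  · filter_upwards [ae_stripMeasure_fst_mem] with p hs y hy
    by_cases hp : p.2 ∈ K
    · rw [indicator_of_mem (mk_mem_prod (mem_univ _) hp)]
      exact hC (y, p) ⟨hy, Ioo_subset_Icc_self hs, hp⟩
    · rw [fderiv_comp_inl_eq_zero_of_snd_notMem hK.isClosed hΦK y hp, norm_zero,
        indicator_of_notMem fun h => hp h.2]
  · refine (integrable_indicator_iff hmeas).2 (integrableOn_const ?_)
    rw [Measure.prod_prod]
    exact ENNReal.mul_ne_top (by simp) hK.measure_lt_top.ne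

end ParametricIntegral

section Bogovskii

open Pointwise

lemma isCompact_tsupport_sub_tsupport {G R S : Type*} [AddGroup G] [TopologicalSpace G]
    [IsTopologicalAddGroup G] [Zero R] [Zero S] {g : G → R} {h : G → S}
    (hg : HasCompactSupport g) (hh : HasCompactSupport h) :
    IsCompact (tsupport g - tsupport h) := by
  rw [sub_eq_add_neg]
  exact hg.isCompact.add hh.isCompact.neg

variable {E : Type*} [NormedAddCommGroup E] [NormedSpace ℝ E]

/-- The Bogovskiĭ kernel `G(x, y)` of the weight `ω`. It vanishes on the diagonal. -/
noncomputable def bogovskiiKernel (ω : E → ℝ) (x y : E) : E :=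
  ∫ s in Ioo (0 : ℝ) 1,
    ((s ^ Module.finrank ℝ E)⁻¹ * ω (y + s⁻¹ • (x - y))) • (s⁻¹ • (x - y))

/-- The Bogovskiĭ field of `f`, the vector field with values `∫ G(x, y) f(y) dy`. -/
noncomputable def bogovskiiField [MeasurableSpace E] (μ : Measure E) (ω f : E → ℝ) (x : E) : E :=
  ∫ y, f y • bogovskiiKernel ω x y ∂μ

/-- The kernel of the singular integral in the derivative of the Bogovskiĭ field: the integral
`∫₀¹ ∂_v η_l(y, (x - y) / s) s^{-(d + 1)} ds`, where `η_l(y, z) = l(z) ω(y + z)` and `d = dim E`.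
The functional `l` and the vector `v` stand for the coordinate `z_i` and the basis vector `e_j`. -/
noncomputable def bogovskiiSingularKernel (ω : E → ℝ) (l : E →L[ℝ] ℝ) (v x y : E) : ℝ :=
  ∫ s in Ioo (0 : ℝ) 1, fderiv ℝ (fun w => l w * ω (y + w)) (s⁻¹ • (x - y)) v *
    (s ^ (Module.finrank ℝ E + 1))⁻¹

/-- The function `(x, s, z) ↦ ω(x + (1 - s) z) f(x - s z)`, which is what the product
`ω(y + (x - y) / s) f(y)` becomes under the substitution `y = x - s z`. -/
def bogovskiiDensity (ω f : E → ℝ) (q : E × ℝ × E) : ℝ :=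
  ω (q.1 + (1 - q.2.1) • q.2.2) * f (q.1 - q.2.1 • q.2.2)

variable {ω f : E → ℝ}

lemma contDiff_bogovskiiDensity {n : WithTop ℕ∞} (hω : ContDiff ℝ n ω) (hf : ContDiff ℝ n f) :
    ContDiff ℝ n (bogovskiiDensity ω f) := by
  unfold bogovskiiDensity
  fun_prop

lemma bogovskiiDensity_eq_zero (x : E) {p : ℝ × E} (hp : p.2 ∉ tsupport ω - tsupport f) :
    bogovskiiDensity ω f (x, p) = 0 := by
  by_contra hne
  refine hp ⟨_, subset_tsupport ω (left_ne_zero_of_mul hne), _,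
    subset_tsupport f (right_ne_zero_of_mul hne), ?_⟩
  simp only
  module

lemma bogovskiiDensity_inv_smul_sub (x y : E) {s : ℝ} (hs : s ≠ 0) :
    bogovskiiDensity ω f (x, s, s⁻¹ • (x - y)) = ω (y + s⁻¹ • (x - y)) * f y := by
  have hpoint : x + (1 - s) • s⁻¹ • (x - y) = y + s⁻¹ • (x - y) := by
    rw [sub_smul, one_smul, smul_inv_smul₀ hs]
    abel
  simp only [bogovskiiDensity, smul_inv_smul₀ hs, sub_sub_cancel, ← hpoint]

-- Moving `x` by `s v` and `z` by `v` fixes `x - s z` and moves `x + (1 - s) z` by `v`.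
lemma fderiv_clm_mul_bogovskiiDensity (hω : ContDiff ℝ 1 ω) (hf : ContDiff ℝ 1 f)
    (l : E →L[ℝ] ℝ) (v x : E) (s : ℝ) (z : E) :
    s * fderiv ℝ (fun q => l q.2.2 * bogovskiiDensity ω f q) (x, s, z) (v, 0) +
      fderiv ℝ (fun p => l p.2 * bogovskiiDensity ω f (x, p)) (s, z) (0, v) =
      fderiv ℝ (fun w => l w * ω (x - s • z + w)) z v * f (x - s • z) := by
  let Φ : E × ℝ × E → ℝ := fun q => l q.2.2 * bogovskiiDensity ω f q
  let η : E → ℝ := fun w => l w * ω (x - s • z + w)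
  have hΦ : DifferentiableAt ℝ Φ (x, s, z) := by
    have := contDiff_bogovskiiDensity hω hf
    exact ContDiff.differentiable (by fun_prop) one_ne_zero _
  have hη : DifferentiableAt ℝ η z := ContDiff.differentiable (by fun_prop) one_ne_zero z
  have hjoint : fderiv ℝ Φ (x, s, z) (s • v, 0, v) = fderiv ℝ η z v * f (x - s • z) := by
    rw [← hΦ.lineDeriv_eq_fderiv, ← hη.lineDeriv_eq_fderiv, lineDeriv, lineDeriv,
      ← deriv_mul_const_field]
    congr 1
    funext t
    simp only [Φ, η, bogovskiiDensity, Prod.mk_add_mk, Prod.smul_mk, smul_zero, add_zero, mul_assoc]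
    congr 3 <;> module
  have hslice : fderiv ℝ (fun p => Φ (x, p)) (s, z) (0, v) = fderiv ℝ Φ (x, s, z) (0, 0, v) :=
    congr($((hΦ.hasFDerivAt.comp (s, z) (hasFDerivAt_prodMk_right x (s, z))).fderiv) (0, v))
  rw [hslice, ← hjoint, ← smul_eq_mul, ← map_smul, ← map_add]
  simp [Φ]

variable [FiniteDimensional ℝ E] [MeasurableSpace E] [BorelSpace E] {μ : Measure E}
  [μ.IsAddHaarMeasure]

lemma integrable_bogovskiiDensity_smul (hω : Continuous ω) (hωc : HasCompactSupport ω)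
    (hf : Continuous f) (hfc : HasCompactSupport f) (x : E) :
    Integrable (fun p => bogovskiiDensity ω f (x, p) • p.2) (stripMeasure μ) := by
  refine integrable_stripMeasure_of_continuous ?_ (isCompact_tsupport_sub_tsupport hωc hfc)
    fun p hp => by rw [bogovskiiDensity_eq_zero x hp, zero_smul]
  unfold bogovskiiDensity
  fun_prop

lemma bogovskiiField_eq_integral_stripMeasure (hω : Continuous ω) (hωc : HasCompactSupport ω)
    (hf : Continuous f) (hfc : HasCompactSupport f) (x : E) :
    bogovskiiField μ ω f x = ∫ p, bogovskiiDensity ω f (x, p) • p.2 ∂stripMeasure μ := by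
  have hcont : Continuous fun p : ℝ × E => bogovskiiDensity ω f (x, p) • p.2 := by
    unfold bogovskiiDensity
    fun_prop
  rw [← integral_integral_inv_pow_smul_comp_inv_smul_sub hcont.stronglyMeasurable
    (integrable_bogovskiiDensity_smul hω hωc hf hfc x) x]
  refine integral_congr_ae (.of_forall fun y => ?_)
  simp only [bogovskiiKernel]
  rw [← integral_smul]
  refine setIntegral_congr_fun measurableSet_Ioo fun s hs => ?_
  simp only [bogovskiiDensity_inv_smul_sub x y hs.1.ne', smul_smul]
  ring_nf

lemma differentiable_bogovskiiField (hω : ContDiff ℝ 1 ω) (hωc : HasCompactSupport ω)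
    (hf : ContDiff ℝ 1 f) (hfc : HasCompactSupport f) :
    Differentiable ℝ (bogovskiiField μ ω f) := by
  intro x
  rw [funext (bogovskiiField_eq_integral_stripMeasure hω.continuous hωc hf.continuous hfc)]
  have := contDiff_bogovskiiDensity hω hf
  exact (hasFDerivAt_integral_stripMeasure
    (Φ := fun q : E × ℝ × E => bogovskiiDensity ω f q • q.2.2) (by fun_prop)
    (isCompact_tsupport_sub_tsupport hωc hfc)
    (fun y p hp => by rw [bogovskiiDensity_eq_zero y hp, zero_smul]) x).differentiableAt

lemma integrable_fderiv_clm_mul_bogovskiiDensity (hω : ContDiff ℝ 1 ω) (hωc : HasCompactSupport ω)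
    (hf : ContDiff ℝ 1 f) (hfc : HasCompactSupport f) (l : E →L[ℝ] ℝ) (v x : E) :
    Integrable (fun p => fderiv ℝ (fun q => l q.2.2 * bogovskiiDensity ω f q) (x, p) (v, 0))
      (stripMeasure μ) := by
  have := contDiff_bogovskiiDensity hω hf
  exact (integrable_fderiv_comp_inl_stripMeasure
    (Φ := fun q : E × ℝ × E => l q.2.2 * bogovskiiDensity ω f q) (by fun_prop)
    (isCompact_tsupport_sub_tsupport hωc hfc)
    (fun y p hp => by rw [bogovskiiDensity_eq_zero y hp, mul_zero]) x).apply_continuousLinearMap v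

lemma clm_fderiv_bogovskiiField (hω : ContDiff ℝ 1 ω) (hωc : HasCompactSupport ω)
    (hf : ContDiff ℝ 1 f) (hfc : HasCompactSupport f) (l : E →L[ℝ] ℝ) (v x : E) :
    l (fderiv ℝ (bogovskiiField μ ω f) x v) =
      ∫ p, fderiv ℝ (fun q => l q.2.2 * bogovskiiDensity ω f q) (x, p) (v, 0)
        ∂stripMeasure μ := by
  have hΦ : ContDiff ℝ 1 fun q : E × ℝ × E => l q.2.2 * bogovskiiDensity ω f q := by
    have := contDiff_bogovskiiDensity hω hf
    fun_prop
  have hK : IsCompact (tsupport ω - tsupport f) := isCompact_tsupport_sub_tsupport hωc hfc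
  have hΦK : ∀ (y : E) (p : ℝ × E), p.2 ∉ tsupport ω - tsupport f →
      l p.2 * bogovskiiDensity ω f (y, p) = 0 := fun y p hp => by
    rw [bogovskiiDensity_eq_zero y hp, mul_zero]
  have hcomp : (fun y => l (bogovskiiField μ ω f y)) =
      fun y => ∫ p, l p.2 * bogovskiiDensity ω f (y, p) ∂stripMeasure μ := by
    funext y
    rw [bogovskiiField_eq_integral_stripMeasure hω.continuous hωc hf.continuous hfc,
      ← l.integral_comp_comm
        (integrable_bogovskiiDensity_smul hω.continuous hωc hf.continuous hfc y)]
    simp only [map_smul, smul_eq_mul, mul_comm]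
  have hparam := hasFDerivAt_integral_stripMeasure (μ := μ) hΦ hK hΦK x
  have hchain : HasFDerivAt (fun y => l (bogovskiiField μ ω f y)) _ x :=
    l.hasFDerivAt.comp x (differentiable_bogovskiiField hω hωc hf hfc x).hasFDerivAt
  rw [hcomp] at hchain
  have := congr($(hchain.unique hparam) v)
  simpa [ContinuousLinearMap.integral_apply
    (integrable_fderiv_comp_inl_stripMeasure hΦ hK hΦK x)] using this

lemma setIntegral_bogovskiiSingularKernel_mul (hω : ContDiff ℝ 1 ω) (hf : ContDiff ℝ 1 f)
    (l : E →L[ℝ] ℝ) (v x : E) {ε : ℝ}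
    (hvert : IntegrableOn (fun p : ℝ × E =>
      p.1⁻¹ * fderiv ℝ (fun q => l q.2 * bogovskiiDensity ω f (x, q)) p (0, v))
      {p | ε < ‖p.1 • p.2‖} (stripMeasure μ))
    (hhor : Integrable (fun p => fderiv ℝ (fun q => l q.2.2 * bogovskiiDensity ω f q) (x, p) (v, 0))
      (stripMeasure μ)) :
    ∫ y in {y | ε < ‖x - y‖}, bogovskiiSingularKernel ω l v x y * f y ∂μ =
      ∫ p in {p | ε < ‖p.1 • p.2‖},
        fderiv ℝ (fun q => l q.2.2 * bogovskiiDensity ω f q) (x, p) (v, 0) ∂stripMeasure μ +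
      ∫ p in {p | ε < ‖p.1 • p.2‖},
        p.1⁻¹ * fderiv ℝ (fun q => l q.2 * bogovskiiDensity ω f (x, q)) p (0, v)
          ∂stripMeasure μ := by
  have hφ := contDiff_bogovskiiDensity hω hf
  have hmeas : StronglyMeasurable fun p : ℝ × E =>
      fderiv ℝ (fun q => l q.2.2 * bogovskiiDensity ω f q) (x, p) (v, 0) +
        p.1⁻¹ * fderiv ℝ (fun q => l q.2 * bogovskiiDensity ω f (x, q)) p (0, v) :=
    .add (Continuous.stronglyMeasurable (by fun_prop)) <|
      measurable_fst.inv.stronglyMeasurable.mul (Continuous.stronglyMeasurable (by fun_prop))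
  rw [← integral_add hhor.integrableOn hvert,
    ← setIntegral_integral_inv_pow_smul_comp_inv_smul_sub hmeas (hhor.integrableOn.add hvert) x]
  refine integral_congr_ae (.of_forall fun y => ?_)
  simp only [bogovskiiSingularKernel]
  rw [← integral_mul_const]
  refine setIntegral_congr_fun measurableSet_Ioo fun s hs => ?_
  have hs₀ := hs.1.ne'
  have hid := fderiv_clm_mul_bogovskiiDensity hω hf l v x s (s⁻¹ • (x - y))
  rw [smul_inv_smul₀ hs₀, sub_sub_cancel] at hid
  simp only [smul_eq_mul]
  rw [mul_right_comm, ← hid]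
  field_simp
  ring

end Bogovskii

lemma eq_bogovskiiField {E : Type*} [NormedAddCommGroup E] [NormedSpace ℝ E] [MeasurableSpace E]
    {μ : Measure E} {ω f : E → ℝ} {Ω : Set E} (hf : tsupport f ⊆ Ω) {G : E → E → E}
    (hG : ∀ x y, x ≠ y → G x y = ∫ s in Ioo (0 : ℝ) 1,
      ((s ^ Module.finrank ℝ E)⁻¹ * ω (y + s⁻¹ • (x - y))) • (s⁻¹ • (x - y)))
    (hGdiag : ∀ x, G x x = 0) {u : E → E} (hu : ∀ x, u x = ∫ y in Ω, f y • G x y ∂μ) :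
    u = bogovskiiField μ ω f := by
  have hkernel : ∀ x y, G x y = bogovskiiKernel ω x y := fun x y => by
    rcases eq_or_ne x y with rfl | hxy
    · simp [hGdiag, bogovskiiKernel]
    · exact hG x y hxy
  funext x
  simp only [hu, hkernel, bogovskiiField]
  exact setIntegral_eq_integral_of_forall_compl_eq_zero fun y hy => by
    rw [image_eq_zero_of_notMem_tsupport fun h => hy (hf h), zero_smul]

theorem bogovskii_derivative_representation_general {E : Type*} [NormedAddCommGroup E]
    [InnerProductSpace ℝ E] [FiniteDimensional ℝ E] [Nontrivial E] [MeasurableSpace E]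
    [BorelSpace E] (μ : Measure E) [μ.IsAddHaarMeasure] {ω f : E → ℝ} (hω : ContDiff ℝ 1 ω)
    (hωc : HasCompactSupport ω) (hf : ContDiff ℝ 1 f) (hfc : HasCompactSupport f)
    (l : E →L[ℝ] ℝ) (v x : E) :
    DifferentiableAt ℝ (bogovskiiField μ ω f) x ∧ ∃ L : ℝ,
      Tendsto (fun ε => ∫ y in {y | ε < ‖x - y‖}, bogovskiiSingularKernel ω l v x y * f y ∂μ)
        (𝓝[>] 0) (𝓝 L) ∧
      l (fderiv ℝ (bogovskiiField μ ω f) x v) =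
        L + (∫ z, l z * inner ℝ z v / ‖z‖ ^ 2 * ω (x + z) ∂μ) * f x := by
  have hφ : ContDiff ℝ 1 fun p : ℝ × E => bogovskiiDensity ω f (x, p) := by
    have := contDiff_bogovskiiDensity hω hf
    fun_prop
  have hK := isCompact_tsupport_sub_tsupport hωc hfc
  have hhor := integrable_fderiv_clm_mul_bogovskiiDensity (μ := μ) hω hωc hf hfc l v x
  have hboundary : ∫ z, radialKernel v z * (l z * bogovskiiDensity ω f (x, 0, z)) ∂μ =
      (∫ z, l z * inner ℝ z v / ‖z‖ ^ 2 * ω (x + z) ∂μ) * f x := by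
    rw [← integral_mul_const]
    refine integral_congr_ae (.of_forall fun z => ?_)
    simp only [radialKernel, bogovskiiDensity, sub_zero, one_smul, zero_smul]
    ring
  have hlim := (tendsto_setIntegral_lt_norm (measurable_fst.smul measurable_snd)
    ae_stripMeasure_smul_ne_zero hhor).add
    (tendsto_setIntegral_inv_fst_mul_fderiv_clm_mul (μ := μ) hφ hK
      (fun p hp => bogovskiiDensity_eq_zero x hp) l v)
  rw [← clm_fderiv_bogovskiiField hω hωc hf hfc, hboundary] at hlim
  refine ⟨differentiable_bogovskiiField hω hωc hf hfc x, _, hlim.congr' ?_, by ring⟩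
  filter_upwards [self_mem_nhdsWithin] with ε hε
  refine (setIntegral_bogovskiiSingularKernel_mul hω hf l v x ?_ hhor).symm
  exact (integrableOn_inv_fst_mul_fderiv (by fun_prop) hK
    (fun p hp => by rw [bogovskiiDensity_eq_zero x hp, mul_zero]) hε v).mono_set
    (ofPred_subset_ofPred.2 fun _ => le_of_lt)

/-- For smooth `f` supported in `Ω`, the partial derivative
`∂u_i/∂x_j` of the Bogovskiĭ field at `x ∈ Ω` equals the principal value singular
integral plus `ω_{ij}(x) f(x)`. -/
theorem bogovskii_derivative_representation
    (n : ℕ) (hn : 2 ≤ n)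
    (Ω B : Set (EuclideanSpace ℝ (Fin n)))
    (hΩo : IsOpen Ω) (hΩb : Bornology.IsBounded Ω)
    (hBball : ∃ c r, 0 < r ∧ B = Metric.ball c r)
    (hBΩ : B ⊆ Ω)
    (hstar : ∀ x ∈ Ω, ∀ y ∈ B, segment ℝ x y ⊆ Ω)
    (ω : EuclideanSpace ℝ (Fin n) → ℝ)
    (hω : ContDiff ℝ (⊤ : ℕ∞) ω) (hωc : HasCompactSupport ω)
    (hωsupp : tsupport ω ⊆ B) (hωint : ∫ x, ω x = 1)
    (f : EuclideanSpace ℝ (Fin n) → ℝ)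
    (hf : ContDiff ℝ (⊤ : ℕ∞) f) (hfc : HasCompactSupport f)
    (hfsupp : tsupport f ⊆ Ω)
    (G : EuclideanSpace ℝ (Fin n) → EuclideanSpace ℝ (Fin n) → EuclideanSpace ℝ (Fin n))
    (hG : ∀ x y, x ≠ y → G x y =
      ∫ s in Set.Ioo (0:ℝ) 1, ((s ^ n)⁻¹ * ω (y + s⁻¹ • (x - y))) • (s⁻¹ • (x - y)))
    (hGdiag : ∀ x, G x x = 0)
    (u : EuclideanSpace ℝ (Fin n) → EuclideanSpace ℝ (Fin n))
    (hu : ∀ x, u x = ∫ y in Ω, f y • G x y)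
    (i j : Fin n)
    -- `∂η_i/∂z_j (y, z)` where `η_i (y, z) = z_i ω (y + z)`
    (Dη : EuclideanSpace ℝ (Fin n) → EuclideanSpace ℝ (Fin n) → ℝ)
    (hDη : ∀ y z, Dη y z =
      fderiv ℝ (fun w : EuclideanSpace ℝ (Fin n) => w i * ω (y + w)) z (EuclideanSpace.single j 1))
    -- `ω_{ij}(x) = ∫ (z_i z_j / |z|²) ω (x + z) dz`
    (ωij : EuclideanSpace ℝ (Fin n) → ℝ)
    (hωij : ∀ x, ωij x = ∫ z, (z i * z j / ‖z‖ ^ 2) * ω (x + z)) :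
    ∀ x ∈ Ω, ∃ L : ℝ,
      Tendsto (fun ε : ℝ =>
          ∫ y in {y : EuclideanSpace ℝ (Fin n) | ε < ‖x - y‖},
            (∫ s in Set.Ioo (0:ℝ) 1, Dη y (s⁻¹ • (x - y)) * (s ^ (n + 1))⁻¹) * f y)
        (𝓝[>] (0:ℝ)) (𝓝 L) ∧
      fderiv ℝ (fun x => u x i) x (EuclideanSpace.single j 1) = L + ωij x * f x := by
  intro x _
  have : Nontrivial (Fin n) := Fin.nontrivial_iff_two_le.2 hn
  obtain rfl : u = bogovskiiField volume ω f :=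
    eq_bogovskiiField hfsupp (by simpa only [finrank_euclideanSpace_fin] using hG) hGdiag hu
  obtain ⟨hdiff, L, hL, hderiv⟩ := bogovskii_derivative_representation_general volume
    (hω.of_le (by simp)) hωc (hf.of_le (by simp)) hfc (EuclideanSpace.proj i)
    (EuclideanSpace.single j 1) x
  refine ⟨L, ?_, ?_⟩
  · simpa only [bogovskiiSingularKernel, finrank_euclideanSpace_fin, EuclideanSpace.coe_proj, hDη]
      using hL
  · have hcoord : HasFDerivAt (fun y => bogovskiiField volume ω f y i) _ x :=
      (EuclideanSpace.proj (𝕜 := ℝ) i).hasFDerivAt.comp x hdiff.hasFDerivAt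
    rw [hcoord.fderiv, ContinuousLinearMap.comp_apply, hderiv, hωij]
    simp [EuclideanSpace.inner_single_right]
end

section
/- There exists a constant C (depending only on n, Ω, ω, χ) such that for all x, y, ȳ ∈ ℝⁿ with 2|y−ȳ| < |x−y| one has |N(x,y) − N(x,ȳ)| ≤ C |y−ȳ| / |x−y|^{n+1}. -/
open MeasureTheory Metric Set Filter Topology

/-!
Put `G(y,z) = χ(y) ∂ᵥ(a(z) ω(y+z))`, a `C¹` function with compact support; it is therefore Lipschitz
and vanishes for `‖z‖ ≥ D`. Hence `G(y, z/s) = 0` unless `s > ‖z‖/D`, while for `s < 1` passing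
from `(y, z/s)` to `(y', z'/s)` costs at most `L s⁻¹ dist((y,z),(y',z'))`. On `‖z‖ ≥ r` the integral
`∫₀¹ s⁻ᵖ G(y, z/s) ds` is thus Lipschitz with constant `L ∫_{r/D}^∞ s⁻ᵖ⁻¹ ds ≲ r⁻ᵖ`. Finally
`2‖y-y'‖ < ‖x-y‖` keeps both `x-y` and `x-y'` in the region `‖z‖ ≥ ‖x-y‖/2`.
-/

theorem inv_pow_succ_eqOn_rpow (p : ℕ) {c : ℝ} (hc : 0 < c) :
    EqOn (fun s : ℝ => (s ^ (p + 1))⁻¹) (fun s => s ^ (-(p : ℝ) - 1)) (Ioi c) := by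
  intro s hs
  simp only
  rw [← neg_add', Real.rpow_neg (hc.trans hs).le, ← Nat.cast_add_one, Real.rpow_natCast]

theorem integrableOn_Ioi_inv_pow_succ {p : ℕ} (hp : p ≠ 0) {c : ℝ} (hc : 0 < c) :
    IntegrableOn (fun s : ℝ => (s ^ (p + 1))⁻¹) (Ioi c) := by
  have hp' : (0 : ℝ) < p := by exact_mod_cast hp.pos
  exact (integrableOn_Ioi_rpow_of_lt (by linarith) hc).congr_fun
    (inv_pow_succ_eqOn_rpow p hc).symm measurableSet_Ioi

theorem integral_Ioi_inv_pow_succ {p : ℕ} (hp : p ≠ 0) {c : ℝ} (hc : 0 < c) :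
    ∫ s in Ioi c, (s ^ (p + 1))⁻¹ = (c ^ p)⁻¹ / p := by
  have hp' : (0 : ℝ) < p := by exact_mod_cast hp.pos
  rw [setIntegral_congr_fun measurableSet_Ioi (inv_pow_succ_eqOn_rpow p hc),
    integral_Ioi_rpow_of_lt (by linarith) hc, sub_add_cancel, neg_div_neg_eq,
    Real.rpow_neg hc.le, Real.rpow_natCast]

section DilationIntegral

open scoped NNReal

variable {Y E : Type*} [SeminormedAddCommGroup E] [NormedSpace ℝ E]
  {p : ℕ} {L : ℝ≥0} {D r s : ℝ} {q q' : Y × E}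

theorem apply_inv_smul_eq_zero {F : Type*} [Zero F] {G : Y × E → F} (hD : 0 < D)
    (hG : ∀ q, D ≤ ‖q.2‖ → G q = 0) (hq : r ≤ ‖q.2‖) (hs : s ∈ Ioc 0 (r / D)) :
    G (q.1, s⁻¹ • q.2) = 0 := by
  refine hG _ ?_
  rw [norm_smul, norm_inv, Real.norm_of_nonneg hs.1.le, inv_mul_eq_div, le_div_iff₀' hs.1]
  exact ((le_div_iff₀ hD).1 hs.2).trans hq

theorem dist_apply_inv_smul_le {F : Type*} [PseudoMetricSpace Y] [PseudoMetricSpace F]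
    {G : Y × E → F} (hL : LipschitzWith L G) (hs : s ∈ Ioc 0 1) :
    dist (G (q.1, s⁻¹ • q.2)) (G (q'.1, s⁻¹ • q'.2)) ≤ L * (s⁻¹ * dist q q') := by
  refine (hL.dist_le_mul _ _).trans ?_
  gcongr
  have one_le_inv : 1 ≤ s⁻¹ := (one_le_inv₀ hs.1).2 hs.2
  rw [Prod.dist_eq, dist_smul₀, norm_inv, Real.norm_of_nonneg hs.1.le]
  refine max_le ?_ ?_
  · exact (le_mul_of_one_le_left dist_nonneg one_le_inv).trans (by gcongr; exact le_max_left _ _)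
  · gcongr
    exact le_max_right _ _

variable {F : Type*} [NormedAddCommGroup F] [NormedSpace ℝ F] {G : Y × E → F}

/-- The integral `∫₀¹ s⁻ᵖ G(y, z/s) ds` of a function `G` over the dilates of its second variable,
at the point `q = (y, z)`. -/
noncomputable def dilationIntegral (p : ℕ) (G : Y × E → F) (q : Y × E) : F :=
  ∫ s in Ioo (0 : ℝ) 1, (s ^ p)⁻¹ • G (q.1, s⁻¹ • q.2)

theorem integrableOn_inv_pow_smul_apply_inv_smul [TopologicalSpace Y] (hGc : Continuous G)
    (hD : 0 < D) (hG : ∀ q, D ≤ ‖q.2‖ → G q = 0) (hr : 0 < r) (hq : r ≤ ‖q.2‖) :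
    IntegrableOn (fun s : ℝ => (s ^ p)⁻¹ • G (q.1, s⁻¹ • q.2)) (Ioo 0 1) := by
  have hc : 0 < r / D := by positivity
  have near_zero : IntegrableOn (fun s : ℝ => (s ^ p)⁻¹ • G (q.1, s⁻¹ • q.2)) (Ioc 0 (r / D)) :=
    integrableOn_zero.congr_fun
      (fun s hs => by simp only [apply_inv_smul_eq_zero hD hG hq hs, smul_zero]) measurableSet_Ioc
  have away_from_zero :
      IntegrableOn (fun s : ℝ => (s ^ p)⁻¹ • G (q.1, s⁻¹ • q.2)) (Icc (r / D) 1) := by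
    refine ContinuousOn.integrableOn_Icc ?_
    have hinv : ContinuousOn (fun s : ℝ => s⁻¹) (Icc (r / D) 1) :=
      continuousOn_inv₀.mono fun s hs => (hc.trans_le hs.1).ne'
    simp only [← inv_pow]
    fun_prop
  refine (near_zero.union away_from_zero).mono_set fun s hs => ?_
  exact (le_or_gt s (r / D)).imp (fun h => ⟨hs.1, h⟩) fun h => ⟨h.le, hs.2.le⟩

variable [PseudoMetricSpace Y]

theorem norm_inv_pow_smul_sub_le (hL : LipschitzWith L G) (hD : 0 < D)
    (hG : ∀ q, D ≤ ‖q.2‖ → G q = 0) (hq : r ≤ ‖q.2‖) (hq' : r ≤ ‖q'.2‖) (hs : s ∈ Ioo 0 1) :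
    ‖(s ^ p)⁻¹ • G (q.1, s⁻¹ • q.2) - (s ^ p)⁻¹ • G (q'.1, s⁻¹ • q'.2)‖ ≤
      (Ioi (r / D)).indicator (fun t => L * dist q q' * (t ^ (p + 1))⁻¹) s := by
  rcases le_or_gt s (r / D) with hsc | hsc
  · rw [apply_inv_smul_eq_zero hD hG hq ⟨hs.1, hsc⟩, apply_inv_smul_eq_zero hD hG hq' ⟨hs.1, hsc⟩,
      sub_self, norm_zero, indicator_of_notMem (notMem_Ioi.2 hsc)]
  · have := hs.1
    rw [indicator_of_mem (mem_Ioi.2 hsc), ← dist_eq_norm, dist_smul₀,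
      Real.norm_of_nonneg (by positivity)]
    calc (s ^ p)⁻¹ * dist (G (q.1, s⁻¹ • q.2)) (G (q'.1, s⁻¹ • q'.2))
        ≤ (s ^ p)⁻¹ * (L * (s⁻¹ * dist q q')) := by
          gcongr
          exact dist_apply_inv_smul_le hL (Ioo_subset_Ioc_self hs)
      _ = L * dist q q' * (s ^ (p + 1))⁻¹ := by rw [pow_succ, mul_inv]; ring

theorem lipschitzOnWith_dilationIntegral {D r : ℝ≥0} (hp : p ≠ 0) (hL : LipschitzWith L G)
    (hD : 0 < D) (hG : ∀ q, D ≤ ‖q.2‖ → G q = 0) (hr : 0 < r) :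
    LipschitzOnWith (L * (D / r) ^ p / p) (dilationIntegral p G) {q | r ≤ ‖q.2‖} := by
  refine LipschitzOnWith.of_dist_le_mul fun q hq q' hq' => ?_
  have hc : (0 : ℝ) < r / D := by positivity
  set g : ℝ → ℝ := fun s => L * dist q q' * (s ^ (p + 1))⁻¹
  have hg : Integrable ((Ioi (r / D : ℝ)).indicator g) :=
    (integrable_indicator_iff measurableSet_Ioi).2
      ((integrableOn_Ioi_inv_pow_succ hp hc).const_mul _)
  have hg_nonneg : 0 ≤ (Ioi (r / D : ℝ)).indicator g :=
    indicator_nonneg fun s hs => by have := hc.trans hs; positivity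
  rw [dist_eq_norm, dilationIntegral, dilationIntegral, ← integral_sub
    (integrableOn_inv_pow_smul_apply_inv_smul hL.continuous hD hG hr hq)
    (integrableOn_inv_pow_smul_apply_inv_smul hL.continuous hD hG hr hq')]
  calc _ ≤ ∫ s in Ioo (0 : ℝ) 1, (Ioi (r / D : ℝ)).indicator g s :=
        norm_integral_le_of_norm_le hg.integrableOn <|
          ae_restrict_of_forall_mem measurableSet_Ioo fun s hs =>
            norm_inv_pow_smul_sub_le hL hD hG hq hq' hs
    _ ≤ ∫ s, (Ioi (r / D : ℝ)).indicator g s :=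
        setIntegral_le_integral hg (ae_of_all _ hg_nonneg)
    _ = L * dist q q' * (((r / D : ℝ) ^ p)⁻¹ / p) := by
        rw [integral_indicator measurableSet_Ioi, integral_const_mul,
          integral_Ioi_inv_pow_succ hp hc]
    _ = ↑(L * (D / r) ^ p / p) * dist q q' := by
        push_cast
        rw [← inv_pow, inv_div]
        ring

theorem norm_dilationIntegral_sub_le {G : E × E → F} {D : ℝ≥0} (hp : p ≠ 0)
    (hL : LipschitzWith L G) (hD : 0 < D) (hG : ∀ q, D ≤ ‖q.2‖ → G q = 0) {x y y' : E}
    (h : 2 * ‖y - y'‖ < ‖x - y‖) :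
    ‖dilationIntegral p G (y, x - y) - dilationIntegral p G (y', x - y')‖ ≤
      L * (2 * D) ^ p / p * ‖y - y'‖ / ‖x - y‖ ^ p := by
  have hr : 0 < ‖x - y‖₊ / 2 := by
    have : 0 < ‖x - y‖ := (by positivity : 0 ≤ 2 * ‖y - y'‖).trans_lt h
    exact half_pos this
  have hy : (↑(‖x - y‖₊ / 2) : ℝ) ≤ ‖x - y‖ := half_le_self (norm_nonneg _)
  have hy' : (↑(‖x - y‖₊ / 2) : ℝ) ≤ ‖x - y'‖ := by
    have := norm_sub_le_norm_sub_add_norm_sub x y' y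
    rw [norm_sub_rev y' y] at this
    push_cast [coe_nnnorm]
    linarith
  have hdist : dist (y, x - y) (y', x - y') = ‖y - y'‖ := by
    rw [Prod.dist_eq, dist_sub_left, max_self, dist_eq_norm]
  have hlip := (lipschitzOnWith_dilationIntegral hp hL hD hG hr).dist_le_mul
    (y, x - y) hy (y', x - y') hy'
  rw [dist_eq_norm, hdist] at hlip
  refine hlip.trans_eq ?_
  push_cast [coe_nnnorm]
  rw [div_div_eq_mul_div, div_pow, mul_comm (D : ℝ) 2]
  ring

theorem exists_norm_dilationIntegral_sub_le {E : Type*} [NormedAddCommGroup E]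
    [NormedSpace ℝ E] {G : E × E → F} (hp : p ≠ 0) (hGc : HasCompactSupport G)
    (hG : ContDiff ℝ 1 G) :
    ∃ C : ℝ, ∀ x y y' : E, 2 * ‖y - y'‖ < ‖x - y‖ →
      ‖dilationIntegral p G (y, x - y) - dilationIntegral p G (y', x - y')‖ ≤
        C * ‖y - y'‖ / ‖x - y‖ ^ p := by
  obtain ⟨L, hL⟩ := hG.lipschitzWith_of_hasCompactSupport hGc one_ne_zero
  obtain ⟨D, hD, hsupp⟩ := hGc.isCompact.isBounded.subset_ball_lt 0 0
  lift D to ℝ≥0 using hD.le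
  have hvanish : ∀ q : E × E, D ≤ ‖q.2‖ → G q = 0 := fun q hq =>
    image_eq_zero_of_notMem_tsupport fun hmem =>
      (mem_ball_zero_iff.1 (hsupp hmem)).not_ge (hq.trans (norm_snd_le q))
  exact ⟨_, fun x y y' h => norm_dilationIntegral_sub_le hp hL (by exact_mod_cast hD) hvanish h⟩

end DilationIntegral

section CutoffDeriv

variable {E : Type*} [NormedAddCommGroup E] [NormedSpace ℝ E]

/-- The function `(y, z) ↦ χ(y) (∂ᵥ η)(y, z)`, where `η(y, z) = a(z) ω(y + z)` is differentiated in
its second variable. The kernel of the theorem is the `dilationIntegral` of this function, with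
`a` the `i`-th coordinate and `v` the `j`-th basis vector. -/
noncomputable def cutoffDeriv (χ a ω : E → ℝ) (v : E) (q : E × E) : ℝ :=
  χ q.1 * fderiv ℝ (fun w => a w * ω (q.1 + w)) q.2 v

variable {χ a ω : E → ℝ}

theorem contDiff_cutoffDeriv {k : WithTop ℕ∞} (hχ : ContDiff ℝ k χ) (ha : ContDiff ℝ (k + 1) a)
    (hω : ContDiff ℝ (k + 1) ω) (v : E) : ContDiff ℝ k (cutoffDeriv χ a ω v) := by
  have hη : ContDiff ℝ (k + 1)
      (Function.uncurry fun (q : E × E) (w : E) => a w * ω (q.1 + w)) := by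
    unfold Function.uncurry
    fun_prop
  exact (hχ.comp contDiff_fst).mul (hη.fderiv_apply contDiff_snd contDiff_const le_rfl)

theorem cutoffDeriv_eq_zero_of_left {q : E × E} (hq : q.1 ∉ tsupport χ) (v : E) :
    cutoffDeriv χ a ω v q = 0 := by
  rw [cutoffDeriv, image_eq_zero_of_notMem_tsupport hq, zero_mul]

theorem cutoffDeriv_eq_zero_of_add {q : E × E} (hq : q.1 + q.2 ∉ tsupport ω) (v : E) :
    cutoffDeriv χ a ω v q = 0 := by
  have hη : q.2 ∉ tsupport fun w => a w * ω (q.1 + w) := fun hmem =>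
    hq (tsupport_comp_subset_preimage ω (continuous_const_add q.1) (tsupport_mul_subset_right hmem))
  rw [cutoffDeriv, fderiv_of_notMem_tsupport ℝ hη, zero_apply, mul_zero]

theorem hasCompactSupport_cutoffDeriv (hχ : HasCompactSupport χ) (hω : HasCompactSupport ω)
    (v : E) : HasCompactSupport (cutoffDeriv χ a ω v) := by
  have hcompact : IsCompact ((fun q : E × E => (q.1, q.2 - q.1)) '' tsupport χ ×ˢ tsupport ω) :=
    (hχ.isCompact.prod hω.isCompact).image (by fun_prop)
  refine HasCompactSupport.intro hcompact fun q hq => ?_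
  by_cases hqχ : q.1 ∈ tsupport χ
  · refine cutoffDeriv_eq_zero_of_add (fun hqω => hq ?_) v
    exact ⟨(q.1, q.1 + q.2), ⟨hqχ, hqω⟩, Prod.ext rfl (add_sub_cancel_left _ _)⟩
  · exact cutoffDeriv_eq_zero_of_left hqχ v

end CutoffDeriv

theorem kernel_N_regularity_bound_general {E : Type*} [NormedAddCommGroup E] [NormedSpace ℝ E]
    {p : ℕ} (hp : p ≠ 0) {a ω χ : E → ℝ} (ha : ContDiff ℝ 2 a)
    (hω : ContDiff ℝ 2 ω) (hωc : HasCompactSupport ω)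
    (hχ : ContDiff ℝ 1 χ) (hχc : HasCompactSupport χ) (v : E)
    (Dη : E → E → ℝ) (hDη : ∀ y z, Dη y z = fderiv ℝ (fun w => a w * ω (y + w)) z v)
    (K : E → E → ℝ)
    (hK : ∀ y z, z ≠ 0 → K y z = ∫ s in Ioo (0 : ℝ) 1, χ y * Dη y (s⁻¹ • z) * (s ^ p)⁻¹)
    (N : E → E → ℝ) (hN : ∀ x y, x ≠ y → N x y = χ x * K y (x - y)) :
    ∃ C : ℝ, ∀ x y y' : E, 2 * ‖y - y'‖ < ‖x - y‖ →
      |N x y - N x y'| ≤ C * ‖y - y'‖ / ‖x - y‖ ^ p := by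
  set G := cutoffDeriv χ a ω v
  have hGsmooth : ContDiff ℝ 1 G :=
    contDiff_cutoffDeriv hχ (one_add_one_eq_two (R := WithTop ℕ∞) ▸ ha)
      (one_add_one_eq_two (R := WithTop ℕ∞) ▸ hω) v
  obtain ⟨C, hC⟩ :=
    exists_norm_dilationIntegral_sub_le hp (hasCompactSupport_cutoffDeriv hχc hωc v) hGsmooth
  obtain ⟨X, hX⟩ := hχc.exists_bound_of_continuous hχ.continuous
  have hNG : ∀ x y, x ≠ y → N x y = χ x * dilationIntegral p G (y, x - y) := fun x y hxy => by
    simp only [hN x y hxy, hK y _ (sub_ne_zero.2 hxy), hDη, dilationIntegral, smul_eq_mul,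
      mul_comm _⁻¹, G, cutoffDeriv]
  refine ⟨X * C, fun x y y' h => ?_⟩
  have hxy : x ≠ y := by
    rintro rfl
    linarith [norm_nonneg (x - y'), norm_eq_zero.2 (sub_self x)]
  have hxy' : x ≠ y' := by
    rintro rfl
    linarith [norm_nonneg (x - y), norm_sub_rev x y]
  calc |N x y - N x y'|
      = ‖χ x‖ * ‖dilationIntegral p G (y, x - y) - dilationIntegral p G (y', x - y')‖ := by
        rw [hNG x y hxy, hNG x y' hxy', ← mul_sub, ← norm_mul, Real.norm_eq_abs]
    _ ≤ X * (C * ‖y - y'‖ / ‖x - y‖ ^ p) :=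
        mul_le_mul (hX x) (hC x y y' h) (norm_nonneg _) ((norm_nonneg _).trans (hX x))
    _ = X * C * ‖y - y'‖ / ‖x - y‖ ^ p := by ring

/-- The kernel `N(x,y) = χ(x) K(y, x−y)` satisfies the Hörmander-type
regularity estimate `|N(x,y) − N(x,y')| ≲ |y−y'| / |x−y|^{n+1}` for `2|y−y'| < |x−y|`. -/
theorem kernel_N_regularity_bound
    (n : ℕ) (hn : 2 ≤ n)
    (Ω B : Set (EuclideanSpace ℝ (Fin n)))
    (hΩo : IsOpen Ω) (hΩb : Bornology.IsBounded Ω)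
    (hBball : ∃ c r, 0 < r ∧ B = Metric.ball c r)
    (hBΩ : B ⊆ Ω)
    (hstar : ∀ x ∈ Ω, ∀ y ∈ B, segment ℝ x y ⊆ Ω)
    (ω : EuclideanSpace ℝ (Fin n) → ℝ)
    (hω : ContDiff ℝ (⊤ : ℕ∞) ω) (hωc : HasCompactSupport ω)
    (hωsupp : tsupport ω ⊆ B) (hωint : ∫ x, ω x = 1)
    (Bt : Set (EuclideanSpace ℝ (Fin n)))
    (hBt : ∃ c r, 0 < r ∧ Bt = Metric.ball c r)
    (hΩBt : closure Ω ⊆ Bt)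
    (d : ℝ) (hd : d = Metric.diam Bt)
    (χ : EuclideanSpace ℝ (Fin n) → ℝ)
    (hχ : ContDiff ℝ (⊤ : ℕ∞) χ) (hχc : HasCompactSupport χ)
    (hχsupp : tsupport χ ⊆ Bt) (hχ1 : ∀ x ∈ Ω, χ x = 1)
    (i j : Fin n)
    -- `∂η_i/∂z_j (y, z)` where `η_i (y, z) = z_i ω (y + z)`
    (Dη : EuclideanSpace ℝ (Fin n) → EuclideanSpace ℝ (Fin n) → ℝ)
    (hDη : ∀ y z, Dη y z =
      fderiv ℝ (fun w : EuclideanSpace ℝ (Fin n) => w i * ω (y + w)) z (EuclideanSpace.single j 1))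
    (K : EuclideanSpace ℝ (Fin n) → EuclideanSpace ℝ (Fin n) → ℝ)
    (hK : ∀ y z, z ≠ 0 → K y z =
      ∫ s in Set.Ioo (0:ℝ) 1, χ y * Dη y (s⁻¹ • z) * (s ^ (n + 1))⁻¹)
    (N : EuclideanSpace ℝ (Fin n) → EuclideanSpace ℝ (Fin n) → ℝ)
    (hN : ∀ x y, x ≠ y → N x y = χ x * K y (x - y)) :
    ∃ C : ℝ, ∀ x y y' : EuclideanSpace ℝ (Fin n),
      2 * ‖y - y'‖ < ‖x - y‖ →
      |N x y - N x y'| ≤ C * ‖y - y'‖ / ‖x - y‖ ^ (n + 1) :=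
  kernel_N_regularity_bound_general n.succ_ne_zero (a := fun w => w i) (by fun_prop)
    (contDiff_infty.1 hω 2) hωc (mod_cast contDiff_infty.1 hχ 1) hχc
    (EuclideanSpace.single j 1) Dη hDη K hK N hN
end
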